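/- If λ →deg μ is a degeneration of Lie algebra laws over ℂ, then α(λ) ≤ α(μ), where α(ν) denotes the maximal dimension of an abelian Lie subalgebra of the Lie algebra (V, ν). -/

import Mathlib

/-!
The set `A_d` of bilinear maps admitting a `d`-dimensional subspace on which they vanish is
`GL(V)`-stable, and the point is that it is Zariski closed.

Closedness is an instance of projective elimination. A tensor `p`, that is a function of
`I : Fin d → Fin n`, has slices `p (update I k ·)`, which are vectors of `ℂⁿ`. Consider the equations
"`p I = 0` for all non-injective `I`" and "`ν` vanishes on all pairs of slices of `p`"; they are
homogeneous in `p` with coefficients polynomial in the structure constants of `ν`.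

* If `W` is a `d`-dimensional subspace with `ν(W,W) = 0`, the `d × d` minors of a basis of `W` form
  a nonzero solution, as the slices are then combinations of the basis
  (`exists_solution_of_abelian`).
* If `p` is any nonzero solution with `p I ≠ 0`, the `d` slices of `p` through `I` are linearly
  independent, so the slices span a space of dimension at least `d` on which `ν` vanishes
  (`exists_abelian_of_solution`). In particular the Plücker relations are not needed.

Elimination itself (`exists_eliminant`) comes from the Nullstellensatz and Nakayama's lemma: if the
system has only the zero solution at a parameter `t₀`, some graded piece of the quotient by the
ideal of the system is killed by a polynomial `h` in the parameters with `h(t₀) = 1`, and then `h`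
vanishes at each parameter that has a nonzero solution.
-/

open Filter Topology


/-- The space of bilinear maps on `ℂⁿ` (candidate Lie brackets). -/
abbrev BilMap (n : ℕ) : Type :=
  (Fin n → ℂ) →ₗ[ℂ] (Fin n → ℂ) →ₗ[ℂ] (Fin n → ℂ)

/-- A Lie algebra law: an alternating bilinear map satisfying the Jacobi identity. -/
def IsLieLaw {n : ℕ} (μ : BilMap n) : Prop :=
  (∀ x, μ x x = 0) ∧ ∀ x y z, μ x (μ y z) + μ y (μ z x) + μ z (μ x y) = 0

/-- The action of `GL(V)` on bilinear maps: `(g·μ)(x,y) = g (μ (g⁻¹x) (g⁻¹y))`. -/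
noncomputable def glAct {n : ℕ} (g : (Fin n → ℂ) ≃ₗ[ℂ] (Fin n → ℂ)) (μ : BilMap n) : BilMap n :=
  (μ.compl₁₂ (g.symm : (Fin n → ℂ) →ₗ[ℂ] (Fin n → ℂ))
      (g.symm : (Fin n → ℂ) →ₗ[ℂ] (Fin n → ℂ))).compr₂
    (g : (Fin n → ℂ) →ₗ[ℂ] (Fin n → ℂ))

/-- The `GL(V)`-orbit of a bilinear map. -/
def glOrbit {n : ℕ} (μ : BilMap n) : Set (BilMap n) :=
  Set.range fun g : (Fin n → ℂ) ≃ₗ[ℂ] (Fin n → ℂ) => glAct g μ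

/-- The structure constants of a bilinear map with respect to the standard basis. -/
def structConsts {n : ℕ} (μ : BilMap n) : Fin n × Fin n × Fin n → ℂ :=
  fun t => μ (Pi.single t.1 1) (Pi.single t.2.1 1) t.2.2

/-- The Zariski closure of a set of bilinear maps: the common zero locus of all
polynomials (in the structure-constant coordinates) vanishing on the set. -/
def zariskiClosure {n : ℕ} (S : Set (BilMap n)) : Set (BilMap n) :=
  {μ | ∀ p : MvPolynomial (Fin n × Fin n × Fin n) ℂ,
      (∀ ν ∈ S, MvPolynomial.eval (structConsts ν) p = 0) →
        MvPolynomial.eval (structConsts μ) p = 0}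
/-- `α(ν)`: the maximal dimension of an abelian subalgebra of `(V, ν)`, i.e. of a
subspace `W` with `ν(W,W) = 0`. -/
noncomputable def maxAbelianDim {n : ℕ} (ν : BilMap n) : ℕ :=
  sSup {d | ∃ W : Submodule ℂ (Fin n → ℂ),
    (∀ x ∈ W, ∀ y ∈ W, ν x y = 0) ∧ d = Module.finrank ℂ W}

/-! ### Projective elimination -/

section Elimination

open MvPolynomial

attribute [local instance] MvPolynomial.gradedAlgebra

/-- A homogeneous polynomial whose coefficients all lie in the ideal `m` is in `m • R[X]_N`. -/
lemma mem_smul_homogeneousSubmodule {σ R : Type*} [CommRing R] (m : Ideal R) (N : ℕ)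
    (q : MvPolynomial σ R) (hq : q.IsHomogeneous N) (hc : ∀ e, coeff e q ∈ m) :
    q ∈ m • homogeneousSubmodule σ R N := by
  rw [q.as_sum]
  refine Submodule.sum_mem _ fun e he => ?_
  have h1 : monomial e (coeff e q) = coeff e q • (monomial e 1 : MvPolynomial σ R) := by
    rw [smul_monomial, smul_eq_mul, mul_one]
  rw [h1]
  refine Submodule.smul_mem_smul (hc e) ?_
  rw [mem_homogeneousSubmodule]
  apply isHomogeneous_monomial
  by_contra h
  exact mem_support_iff.mp he (hq.coeff_eq_zero h)

/-- Projective Nullstellensatz: if there is no common zero except possibly the origin,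
the ideal contains a power of the irrelevant ideal. -/
lemma exists_pow_idealOfVars_le {σ : Type*} [Finite σ] (I : Ideal (MvPolynomial σ ℂ))
    (h : ∀ p : σ → ℂ, (∀ q ∈ I, eval p q = 0) → p = 0) :
    ∃ N : ℕ, idealOfVars σ ℂ ^ N ≤ I := by
  apply Ideal.exists_pow_le_of_le_radical_of_fg _ (idealOfVars_fg σ ℂ)
  rw [← vanishingIdeal_zeroLocus_eq_radical (K := ℂ), idealOfVars, Ideal.span_le]
  rintro _ ⟨s, rfl⟩
  rw [SetLike.mem_coe, mem_vanishingIdeal_iff]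
  intro p hp
  have := h p fun q hq => by simpa [aeval_eq_eval] using hp q hq
  simp [this]

/-- Projective elimination: for homogeneous polynomials whose coefficients are polynomials in
parameters, a parameter `t₀` with only the trivial zero is separated by a polynomial `h` from
all parameters having a nontrivial zero. -/
lemma exists_eliminant {σ τ J : Type*} [Finite σ] (e : ℕ)
    (f : J → MvPolynomial σ (MvPolynomial τ ℂ)) (hf : ∀ j, (f j).IsHomogeneous e) (t₀ : τ → ℂ)
    (h₀ : ∀ p : σ → ℂ, (∀ j, eval₂ (eval t₀) p (f j) = 0) → p = 0) :
    ∃ h : MvPolynomial τ ℂ, eval t₀ h ≠ 0 ∧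
      ∀ (t : τ → ℂ) (p : σ → ℂ), p ≠ 0 → (∀ j, eval₂ (eval t) p (f j) = 0) → eval t h = 0 := by
  set I : Ideal (MvPolynomial σ (MvPolynomial τ ℂ)) := Ideal.span (Set.range f) with hI
  have hIhom : I.IsHomogeneous (homogeneousSubmodule σ (MvPolynomial τ ℂ)) := by
    apply Ideal.homogeneous_span
    rintro _ ⟨j, rfl⟩
    exact ⟨e, hf j⟩
  have hsurj : Function.Surjective (MvPolynomial.map (σ := σ) (eval t₀)) :=
    map_surjective _ fun c => ⟨C c, by simp⟩
  obtain ⟨N, hN⟩ := exists_pow_idealOfVars_le (I.map (MvPolynomial.map (eval t₀))) fun p hp => by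
    refine h₀ p fun j => ?_
    have := hp _ (Ideal.mem_map_of_mem _ (Ideal.subset_span ⟨j, rfl⟩))
    rwa [eval_map] at this
  set m : Ideal (MvPolynomial τ ℂ) := RingHom.ker (eval t₀) with hm
  -- The graded piece of degree `N` is generated by the ideal modulo `m`.
  have key : homogeneousSubmodule σ (MvPolynomial τ ℂ) N ≤
      I.restrictScalars (MvPolynomial τ ℂ) ⊔ m • homogeneousSubmodule σ (MvPolynomial τ ℂ) N := by
    intro q hq
    rw [mem_homogeneousSubmodule] at hq
    have hqI : map (eval t₀) q ∈ I.map (MvPolynomial.map (eval t₀)) := by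
      apply hN
      rw [mem_pow_idealOfVars_iff]
      intro x hx
      have := (hq.map (eval t₀)).coeff_eq_zero (d := x)
      by_contra hlt
      exact mem_support_iff.mp hx (this (by omega))
    obtain ⟨g, hg, hgq⟩ := (Ideal.mem_map_iff_of_surjective _ hsurj).mp hqI
    refine Submodule.mem_sup.mpr ⟨homogeneousComponent N g,
      homogeneousComponent_mem_of_mem hIhom hg N, homogeneousComponent N (q - g), ?_, ?_⟩
    · apply mem_smul_homogeneousSubmodule _ _ _ (homogeneousComponent_isHomogeneous _ _)
      intro d
      rw [coeff_homogeneousComponent]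
      split_ifs
      · have := congrArg (coeff d) hgq
        rw [coeff_map, coeff_map] at this
        rw [hm, RingHom.mem_ker, coeff_sub, map_sub, this, sub_self]
      · exact zero_mem _
    · rw [map_sub, homogeneousComponent_eq_self hq]
      ring
  obtain ⟨h, h1, h2⟩ := Submodule.exists_sub_one_mem_and_smul_le_of_fg_of_le_sup
    (homogeneousSubmodule_fg σ (MvPolynomial τ ℂ) N) le_rfl key
  refine ⟨h, ?_, fun t p hp hz => ?_⟩
  · rw [hm, RingHom.mem_ker, map_sub, map_one, sub_eq_zero] at h1
    rw [h1]
    exact one_ne_zero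
  · obtain ⟨s, hs⟩ := Function.ne_iff.mp hp
    have hmem : h • (X s ^ N : MvPolynomial σ (MvPolynomial τ ℂ)) ∈ I :=
      h2 (Submodule.smul_mem_pointwise_smul _ _ _
        ((mem_homogeneousSubmodule _ _).mpr (isHomogeneous_X_pow s N)))
    have hle : I ≤ RingHom.ker (eval₂Hom (eval t) p) := by
      rw [hI, Ideal.span_le]
      rintro _ ⟨j, rfl⟩
      exact hz j
    have := hle hmem
    rw [RingHom.mem_ker, smul_eq_C_mul, map_mul, map_pow] at this
    simp only [coe_eval₂Hom, eval₂_C, eval₂_X] at this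
    exact (mul_eq_zero.mp this).resolve_right (pow_ne_zero _ hs)

end Elimination

/-! ### Slices of tensors and abelian subspaces -/

section Slices

variable {n d : ℕ}

/-- The slice of the tensor `p` through the multi-index `I` in direction `k`, a vector of `ℂⁿ`. -/
def tensorSlice (p : (Fin d → Fin n) → ℂ) (I : Fin d → Fin n) (k : Fin d) : Fin n → ℂ :=
  fun j => p (Function.update I k j)

/-- `p` vanishes on multi-indices with a repetition, and `ν` vanishes on all pairs of slices
of `p`. -/
def IsSliceSolution (ν : BilMap n) (p : (Fin d → Fin n) → ℂ) : Prop :=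
  (∀ I, ¬ Function.Injective I → p I = 0) ∧
    ∀ I k I' k', ν (tensorSlice p I k) (tensorSlice p I' k') = 0

/-- `d` linearly independent vectors in `ℂⁿ` have a nonzero `d × d` minor. -/
lemma exists_minor_ne_zero (x : Fin d → Fin n → ℂ) (hx : LinearIndependent ℂ x) :
    ∃ I : Fin d → Fin n, (Matrix.of fun a b => x a (I b)).det ≠ 0 := by
  have hr : (Matrix.of x).rank = d := by
    simpa using LinearIndependent.rank_matrix (M := Matrix.of x) hx
  rw [Matrix.rank_eq_finrank_span_cols] at hr
  obtain ⟨f, hf, -, hli⟩ :=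
    Submodule.exists_fun_fin_finrank_span_eq ℂ (Set.range (Matrix.of x).col)
  choose I hI using hf
  refine ⟨fun b => I (Fin.cast hr.symm b), ?_⟩
  have h2 : LinearIndependent ℂ (Matrix.of fun a b => x a (I (Fin.cast hr.symm b))).col := by
    have h3 := hli.comp (Fin.cast hr.symm) (Fin.cast_injective _)
    have h4 : (Matrix.of fun a b => x a (I (Fin.cast hr.symm b))).col =
        f ∘ Fin.cast hr.symm := by
      funext b
      simp only [Function.comp, ← hI]
      rfl
    rw [h4]
    exact h3
  exact ((Matrix.isUnit_iff_isUnit_det _).mp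
    (Matrix.linearIndependent_cols_iff_isUnit.mp h2)).ne_zero

/-- The minors of a basis of a subspace on which `ν` vanishes form a nonzero solution. -/
lemma exists_solution_of_abelian (ν : BilMap n) (W : Submodule ℂ (Fin n → ℂ))
    (hW : ∀ x ∈ W, ∀ y ∈ W, ν x y = 0) (hd : Module.finrank ℂ W = d) :
    ∃ p : (Fin d → Fin n) → ℂ, p ≠ 0 ∧ IsSliceSolution ν p := by
  let b := Module.finBasisOfFinrankEq ℂ W hd
  let x : Fin d → Fin n → ℂ := fun a => (b a : Fin n → ℂ)
  have hx : LinearIndependent ℂ x := b.linearIndependent.map' W.subtype W.ker_subtype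
  let p : (Fin d → Fin n) → ℂ := fun I => (Matrix.of fun a b => x a (I b)).det
  have hp : ∀ I k, tensorSlice p I k ∈ W := by
    intro I k
    -- Cofactor expansion along column `k`.
    have : tensorSlice p I k =
        ∑ a, (Matrix.of fun a b => x a (I b)).adjugate k a • x a := by
      funext j
      have h1 : tensorSlice p I k j =
          ((Matrix.of fun a b => x a (I b)).updateCol k fun a => x a j).det := by
        simp only [tensorSlice, p]
        congr 1
        ext a c
        by_cases hc : c = k
        · subst hc; simp
        · simp [hc]
      rw [h1, ← Matrix.cramer_apply, Matrix.cramer_eq_adjugate_mulVec]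
      simp [Matrix.mulVec, dotProduct]
    rw [this]
    exact W.sum_mem fun a _ => W.smul_mem _ (b a).2
  refine ⟨p, ?_, ?_, fun I k I' k' => hW _ (hp I k) _ (hp I' k')⟩
  · obtain ⟨I, hI⟩ := exists_minor_ne_zero x hx
    exact fun h => hI (congrFun h I)
  · intro I hI
    simp only [Function.Injective, not_forall] at hI
    obtain ⟨a, c, hac, hne⟩ := hI
    exact Matrix.det_zero_of_column_eq hne fun i => by simp [hac]

/-- The slices of a nonzero solution span a space of dimension at least `d` on which `ν`
vanishes. -/
lemma exists_abelian_of_solution (ν : BilMap n) (p : (Fin d → Fin n) → ℂ) (hp : p ≠ 0)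
    (hs : IsSliceSolution ν p) :
    ∃ W : Submodule ℂ (Fin n → ℂ),
      (∀ x ∈ W, ∀ y ∈ W, ν x y = 0) ∧ d ≤ Module.finrank ℂ W := by
  obtain ⟨I, hI⟩ := Function.ne_iff.mp hp
  have hinj : Function.Injective I := by
    by_contra h
    exact hI (hs.1 I h)
  let S : Set (Fin n → ℂ) := Set.range fun q : (Fin d → Fin n) × Fin d => tensorSlice p q.1 q.2
  refine ⟨Submodule.span ℂ S, ?_, ?_⟩
  · intro x hx y hy
    induction hx, hy using Submodule.span_induction₂ with
    | mem_mem x y hx hy =>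
      obtain ⟨q, rfl⟩ := hx
      obtain ⟨q', rfl⟩ := hy
      exact hs.2 _ _ _ _
    | zero_left => simp
    | zero_right => simp
    | add_left _ _ _ _ _ _ h1 h2 => simp [h1, h2]
    | add_right _ _ _ _ _ _ h1 h2 => simp [h1, h2]
    | smul_left _ _ _ _ _ h => simp [h]
    | smul_right _ _ _ _ _ h => simp [h]
  · -- In the coordinates `I 0, …, I (d-1)` the slices through `I` are `p I` times unit vectors.
    have hval : ∀ k l, tensorSlice p I k (I l) = if l = k then p I else 0 := by
      intro k l
      split_ifs with h
      · subst h; simp [tensorSlice]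
      · refine hs.1 _ fun hu => h ?_
        apply hu
        simp [Function.update_of_ne h]
    have hli : LinearIndependent ℂ fun k => tensorSlice p I k := by
      rw [Fintype.linearIndependent_iff]
      intro g hg l
      have := congrFun hg (I l)
      simpa [Finset.sum_apply, hval, show p I ≠ 0 from hI] using this
    calc d = Module.finrank ℂ (Submodule.span ℂ (Set.range fun k => tensorSlice p I k)) := by
          rw [finrank_span_eq_card hli, Fintype.card_fin]
      _ ≤ _ := Submodule.finrank_mono (Submodule.span_mono (by
          rintro _ ⟨k, rfl⟩
          exact ⟨(I, k), rfl⟩))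

/-! ### The equations as polynomials -/

open MvPolynomial in
open scoped Classical in
/-- The equations of `IsSliceSolution` as polynomials in `p` with coefficients polynomial in the
structure constants. The linear equations `p I = 0` are squared so that all degrees are `2`. -/
noncomputable def sliceEquation (n d : ℕ) :
    (Fin d → Fin n) ⊕ ((Fin d → Fin n) × Fin d × (Fin d → Fin n) × Fin d × Fin n) →
      MvPolynomial (Fin d → Fin n) (MvPolynomial (Fin n × Fin n × Fin n) ℂ)
  | .inl I => if Function.Injective I then 0 else X I ^ 2
  | .inr (I, k, I', k', c) => ∑ a, ∑ b,
      C (X (a, b, c)) * (X (Function.update I k a) * X (Function.update I' k' b))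

open MvPolynomial in
lemma sliceEquation_isHomogeneous (j) : (sliceEquation n d j).IsHomogeneous 2 := by
  rcases j with I | ⟨I, k, I', k', c⟩
  · simp only [sliceEquation]
    split_ifs
    · exact isHomogeneous_zero _ _ _
    · exact isHomogeneous_X_pow I 2
  · simp only [sliceEquation]
    refine IsHomogeneous.sum _ _ _ fun a _ => IsHomogeneous.sum _ _ _ fun b _ => ?_
    have := (isHomogeneous_C (Fin d → Fin n) (X (a, b, c) : MvPolynomial (Fin n × Fin n × Fin n) ℂ)).mul
      ((isHomogeneous_X (MvPolynomial (Fin n × Fin n × Fin n) ℂ) (Function.update I k a)).mul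
        (isHomogeneous_X (MvPolynomial (Fin n × Fin n × Fin n) ℂ) (Function.update I' k' b)))
    simpa using this

lemma bilMap_apply_eq_sum (ν : BilMap n) (x y : Fin n → ℂ) (c : Fin n) :
    ν x y c = ∑ a, ∑ b, structConsts ν (a, b, c) * (x a * y b) := by
  have hx := pi_eq_sum_univ' x
  have hy := pi_eq_sum_univ' y
  conv_lhs => rw [hx, hy]
  simp only [map_sum, map_smul, LinearMap.sum_apply, LinearMap.smul_apply, Finset.sum_apply,
    Pi.smul_apply, smul_eq_mul, structConsts, Finset.mul_sum]
  rw [Finset.sum_comm]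
  refine Finset.sum_congr rfl fun a _ => Finset.sum_congr rfl fun b _ => ?_
  ring

open MvPolynomial in
lemma forall_eval_sliceEquation_iff (ν : BilMap n) (p : (Fin d → Fin n) → ℂ) :
    (∀ j, eval₂ (eval (structConsts ν)) p (sliceEquation n d j) = 0) ↔ IsSliceSolution ν p := by
  rw [Sum.forall, IsSliceSolution]
  refine and_congr (forall_congr' fun I => ?_) ?_
  · by_cases h : Function.Injective I <;> simp [sliceEquation, h]
  · have : ∀ I k I' k' c, eval₂ (eval (structConsts ν)) p
        (sliceEquation n d (.inr (I, k, I', k', c))) =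
        ν (tensorSlice p I k) (tensorSlice p I' k') c := by
      intro I k I' k' c
      rw [bilMap_apply_eq_sum]
      simp [sliceEquation, eval₂_sum, tensorSlice]
    simp only [Prod.forall, this, funext_iff, Pi.zero_apply]

end Slices

/-! ### Degenerations -/

lemma glAct_apply {n : ℕ} (g : (Fin n → ℂ) ≃ₗ[ℂ] (Fin n → ℂ)) (ν : BilMap n) (x y : Fin n → ℂ) :
    glAct g ν x y = g (ν (g.symm x) (g.symm y)) := rfl

lemma bddAbove_abelianDims {n : ℕ} (ν : BilMap n) :
    BddAbove {d | ∃ W : Submodule ℂ (Fin n → ℂ),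
      (∀ x ∈ W, ∀ y ∈ W, ν x y = 0) ∧ d = Module.finrank ℂ W} := by
  refine ⟨n, ?_⟩
  rintro _ ⟨W, -, rfl⟩
  simpa using W.finrank_le

/-- If `λ →deg μ` is a degeneration of Lie algebra laws over `ℂ`, then
`α(λ) ≤ α(μ)`, where `α` is the maximal dimension of an abelian subalgebra. -/
theorem maxAbelianDim_le_of_degeneration (n : ℕ) (lam mu : BilMap n)
    (hlam : IsLieLaw lam) (hmu : IsLieLaw mu)
    (hdeg : mu ∈ zariskiClosure (glOrbit lam)) :
    maxAbelianDim lam ≤ maxAbelianDim mu := by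
  obtain ⟨W, hW, hWd⟩ := Nat.sSup_mem (⟨0, ⊥, by simp, by simp⟩ :
    {d | ∃ W : Submodule ℂ (Fin n → ℂ),
      (∀ x ∈ W, ∀ y ∈ W, lam x y = 0) ∧ d = Module.finrank ℂ W}.Nonempty)
    (bddAbove_abelianDims lam)
  change maxAbelianDim lam = _ at hWd
  rw [hWd]
  by_cases hsol : ∃ p : (Fin (Module.finrank ℂ W) → Fin n) → ℂ, p ≠ 0 ∧ IsSliceSolution mu p
  · obtain ⟨p, hp, hs⟩ := hsol
    obtain ⟨W', hW', hd⟩ := exists_abelian_of_solution mu p hp hs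
    exact hd.trans (le_csSup (bddAbove_abelianDims mu) ⟨W', hW', rfl⟩)
  · exfalso
    obtain ⟨h, hne, hz⟩ := exists_eliminant 2 (sliceEquation n (Module.finrank ℂ W))
      sliceEquation_isHomogeneous (structConsts mu) fun p hp => by
        by_contra h0
        exact hsol ⟨p, h0, (forall_eval_sliceEquation_iff mu p).mp hp⟩
    refine hne (hdeg h ?_)
    rintro _ ⟨g, rfl⟩
    obtain ⟨p, hp, hs⟩ := exists_solution_of_abelian (d := Module.finrank ℂ W) (glAct g lam)
      (W.map (g : (Fin n → ℂ) →ₗ[ℂ] (Fin n → ℂ))) (by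
        rintro _ ⟨x, hx, rfl⟩ _ ⟨y, hy, rfl⟩
        simp [glAct_apply, hW x hx y hy]) (LinearEquiv.finrank_map_eq g W)
    exact hz _ p hp ((forall_eval_sliceEquation_iff _ p).mpr hs)
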